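/- (i) There is C > 0 such that |(εψ_n)(x)| ≤ C for every integer n ≥ 1 and every x ∈ ℝ. (ii) For every a ∈ ℝ there is C_a > 0 such that |∫_a^x ψ_n(y) dy| ≤ C_a for every integer n ≥ 1 and every x ∈ ℝ. -/

import Mathlib

open MeasureTheory Filter Set

noncomputable section

/-- The Airy function `Ai(x) = (1/π)·lim_{b→∞} ∫_0^b cos(t³/3 + x·t) dt`. -/
def Ai (x : ℝ) : ℝ :=
  (1 / Real.pi) *
    limUnder Filter.atTop (fun b : ℝ => ∫ t in (0:ℝ)..b, Real.cos (t ^ 3 / 3 + x * t))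

/-- The Airy kernel. -/
def KAi (x y : ℝ) : ℝ :=
  if x = y then (deriv Ai x) ^ 2 - x * (Ai x) ^ 2
  else (Ai x * deriv Ai y - deriv Ai x * Ai y) / (x - y)

/-- One-point correlation function of the Airy₂ random point field. -/
def rho (x : ℝ) : ℝ := (deriv Ai x) ^ 2 - x * (Ai x) ^ 2

/-- Probabilists' Hermite polynomial `Ĥ_m(x) = (−1)^m e^{x²/2} (d/dx)^m e^{−x²/2}`. -/
def hermiteP (m : ℕ) (x : ℝ) : ℝ :=
  (-1 : ℝ) ^ m * Real.exp (x ^ 2 / 2) * iteratedDeriv m (fun t => Real.exp (-t ^ 2 / 2)) x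

/-- Normalized oscillator function `φ_m`. -/
def osc (m : ℕ) (x : ℝ) : ℝ :=
  (2 * Real.pi) ^ (-(1:ℝ)/4) * ((m.factorial : ℝ)) ^ (-(1:ℝ)/2) *
    Real.exp (-x ^ 2 / 4) * hermiteP m x

/-- `ψ_mⁿ(x) = n^{1/12}·φ_m(2√n + n^{−1/6}·x)`. -/
def psiUp (n m : ℕ) (x : ℝ) : ℝ :=
  (n : ℝ) ^ ((1:ℝ)/12) * osc m (2 * Real.sqrt n + (n : ℝ) ^ (-(1:ℝ)/6) * x)

/-- `ψ_n = ψ_nⁿ`. -/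
def psiN (n : ℕ) : ℝ → ℝ := psiUp n n

/-- The finite-`n` Airy kernel. -/
def KAiN (n : ℕ) (x y : ℝ) : ℝ :=
  if x = y then
    (deriv (psiN n) x) ^ 2 - psiN n x * deriv (deriv (psiN n)) x
      - (1 / (2 * (n : ℝ) ^ ((1:ℝ)/3))) * (psiN n x) ^ 2
  else
    (psiN n x * deriv (psiN n) y - deriv (psiN n) x * psiN n y) / (x - y)
      - (1 / (2 * (n : ℝ) ^ ((1:ℝ)/3))) * (psiN n x * psiN n y)

/-- `(εf)(x) = (1/2)·∫_ℝ sign(x − y)·f(y) dy`. -/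
def epsF (f : ℝ → ℝ) (x : ℝ) : ℝ := (1/2) * ∫ y : ℝ, Real.sign (x - y) * f y

/-- `εψ_n`. -/
def epsPsi (n : ℕ) : ℝ → ℝ := epsF (psiN n)

/-- `J₁(x,y) = K_Ai(x,y) + (1/2)·Ai(x)·(1 − ∫_y^∞ Ai(u) du)`. -/
def J1 (x y : ℝ) : ℝ := KAi x y + (1/2) * Ai x * (1 - ∫ u in Set.Ioi y, Ai u)

/-- Scalar part of the quaternion product of Airy₁ kernels. -/
def L1 (x y : ℝ) : ℝ :=
  J1 x y * J1 y x -
    deriv (fun v => J1 x v) y * ((∫ u in x..y, J1 u x) - (1/2) * Real.sign (y - x))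

/-- `J₁ⁿ(x,y) = K_Aiⁿ(x,y) + (1/2)·ψ_{n−1}ⁿ(x)·(εψ_n)(y)`. -/
def J1N (n : ℕ) (x y : ℝ) : ℝ :=
  KAiN n x y + (1/2) * psiUp n (n - 1) x * epsPsi n y

/-- Scalar part of the quaternion product of finite-`n` Airy₁ kernels. -/
def L1N (n : ℕ) (x y : ℝ) : ℝ :=
  J1N n x y * J1N n y x -
    deriv (fun v => J1N n x v) y * ((∫ u in x..y, J1N n u x) - (1/2) * Real.sign (y - x))

/-- `ρ̂(x) = (1/π)·√(−x)` for `x < 0`, and `0` otherwise. -/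
def rhoHat (x : ℝ) : ℝ := if x < 0 then Real.sqrt (-x) / Real.pi else 0

/-- `ρ̂ⁿ(x) = (1/π)·√(−x·(1 + x/(4·n^{2/3})))` on `(−4n^{2/3}, 0)`, and `0` otherwise. -/
def rhoHatN (n : ℕ) (x : ℝ) : ℝ :=
  if -(4 * (n : ℝ) ^ ((2:ℝ)/3)) < x ∧ x < 0 then
    Real.sqrt (-x * (1 + x / (4 * (n : ℝ) ^ ((2:ℝ)/3)))) / Real.pi
  else 0

/-- `G_{a,b,c}(x,y) = |x|^{−a}·|y|^{−b}·|x−y|^{−c}`. -/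
def Gf (a b c : ℝ) (x y : ℝ) : ℝ := |x| ^ (-a) * |y| ^ (-b) * |x - y| ^ (-c)

/-- `Ĝ_{a,b,c}(x,y) = G_{a,b,c}(x,y) + G_{a,b,c}(y,x)`. -/
def Ghat (a b c : ℝ) (x y : ℝ) : ℝ := Gf a b c x y + Gf a b c y x

/-- Soft-edge one-point correlation function of the `n`-point GUE ensemble. -/
def rhoN (n : ℕ) (x : ℝ) : ℝ :=
  (deriv (psiN n) x) ^ 2 - (x ^ 2 / (4 * (n : ℝ) ^ ((2:ℝ)/3)) + x) * (psiN n x) ^ 2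

end


/-- Energy bound in the oscillatory region. -/
lemma bulk_energy {L : ℝ} (hL : 1 ≤ L) {f g : ℝ → ℝ} (hf : ∀ x, HasDerivAt f (g x) x)
    (hg : ∀ x, HasDerivAt g ((x ^ 2 / (4 * L) - L) * f x) x)
    (h0 : √L * f 0 ^ 2 + g 0 ^ 2 / √L ≤ 2) {x : ℝ} (hx0 : 0 ≤ x) (hx1 : x ≤ 2 * L - 2) :
    √(L - x ^ 2 / (4 * L)) * f x ^ 2 + g x ^ 2 / √(L - x ^ 2 / (4 * L)) ≤ 4 := by
  have hLp : 0 < L := by linarith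
  set r : ℝ → ℝ := fun x => √(L - x ^ 2 / (4 * L)) with hr
  set m : ℝ → ℝ := fun x => -(x / (4 * L)) / (r x) ^ 3 with hm
  have hq : ∀ y ∈ Icc (0:ℝ) (2 * L - 2), 1 ≤ L - y ^ 2 / (4 * L) := by
    rintro y ⟨h1, h2⟩
    have : y ^ 2 / (4 * L) ≤ L - 1 := by
      rw [div_le_iff₀ (by positivity)]
      nlinarith
    linarith
  have hr1 : ∀ y ∈ Icc (0:ℝ) (2 * L - 2), 1 ≤ r y := by
    intro y hy
    exact Real.one_le_sqrt.mpr (hq y hy)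
  have hrsq : ∀ y ∈ Icc (0:ℝ) (2 * L - 2), r y ^ 2 = L - y ^ 2 / (4 * L) := by
    intro y hy
    exact Real.sq_sqrt (by linarith [hq y hy])
  have hmb : ∀ y ∈ Icc (0:ℝ) (2 * L - 2), -(1/2) ≤ m y ∧ m y ≤ 0 := by
    intro y hy
    have h1 := hr1 y hy
    have h3 : 1 ≤ r y ^ 3 := one_le_pow₀ h1
    have hy0 := hy.1
    have : y / (4 * L) ≤ 1/2 := by
      rw [div_le_iff₀ (by positivity)]; linarith [hy.2]
    have hn : 0 ≤ y / (4 * L) := by positivity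
    constructor
    · simp only [hm]
      rw [le_div_iff₀ (by positivity)]
      nlinarith
    · simp only [hm]
      apply div_nonpos_of_nonpos_of_nonneg <;> linarith
  have hrd : ∀ y ∈ Icc (0:ℝ) (2 * L - 2), HasDerivAt r (-(y / (4 * L)) / r y) y := by
    intro y hy
    have h1 : HasDerivAt (fun x : ℝ => L - x ^ 2 / (4 * L)) (-(2 * y / (4 * L))) y := by
      have := (((hasDerivAt_id y).pow 2).div_const (4 * L)).const_sub L
      simpa using this
    have := h1.sqrt (by linarith [hq y hy])
    convert this using 1
    simp only [hr]
    field_simp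
  have hmd : ∀ y ∈ Icc (0:ℝ) (2 * L - 2),
      HasDerivAt m (-(1 / (4 * L * r y ^ 3)) - 3 * y ^ 2 / (16 * L ^ 2 * r y ^ 5)) y := by
    intro y hy
    have h1 := hr1 y hy
    have h2 : r y ≠ 0 := by positivity
    have := (((hasDerivAt_id y).div_const (4 * L)).neg).div ((hrd y hy).pow 3) (pow_ne_zero 3 h2)
    refine HasDerivAt.congr_deriv this ?_
    simp
    field_simp
    ring
  set E : ℝ → ℝ := fun y => r y * f y ^ 2 + g y ^ 2 / r y + m y * (f y * g y) with hE
  have hEd : ∀ y ∈ Icc (0:ℝ) (2 * L - 2), HasDerivAt E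
      ((-(1 / (4 * L * r y ^ 3)) - 3 * y ^ 2 / (16 * L ^ 2 * r y ^ 5)) * (f y * g y)) y := by
    intro y hy
    have h1 := hr1 y hy
    have h2 : r y ≠ 0 := by positivity
    have := (((hrd y hy).mul ((hf y).pow 2)).add (((hg y).pow 2).div (hrd y hy) h2)).add
      ((hmd y hy).mul ((hf y).mul (hg y)))
    refine HasDerivAt.congr_deriv this ?_
    have h3 : (y ^ 2 / (4 * L) - L) = - r y ^ 2 := by rw [hrsq y hy]; ring
    rw [h3]
    simp [hm]
    field_simp
    ring
  have hW : ∀ y ∈ Icc (0:ℝ) (2 * L - 2), |f y * g y| ≤ (2/3) * E y ∧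
      r y * f y ^ 2 + g y ^ 2 / r y ≤ (4/3) * E y := by
    intro y hy
    have h1 := hr1 y hy
    have h2 : r y ≠ 0 := by positivity
    obtain ⟨ha, hb⟩ := hmb y hy
    have hp : 2 * |f y * g y| ≤ r y * f y ^ 2 + g y ^ 2 / r y := by
      have e : r y * f y ^ 2 + g y ^ 2 / r y = ((r y * |f y|) ^ 2 + |g y| ^ 2) / r y := by
        rw [mul_pow, sq_abs, sq_abs]; field_simp
      rw [e, le_div_iff₀ (by positivity), abs_mul]
      nlinarith [sq_nonneg (r y * |f y| - |g y|)]
    have hmm : |m y * (f y * g y)| ≤ (1/2) * |f y * g y| := by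
      rw [abs_mul]
      exact mul_le_mul_of_nonneg_right (abs_le.mpr ⟨ha, by linarith⟩) (abs_nonneg _)
    have := (abs_le.mp hmm).1
    simp only [hE]
    constructor <;> linarith
  have hanti : AntitoneOn (fun y => E y * Real.exp ((2/3) * m y)) (Icc (0:ℝ) (2 * L - 2)) := by
    have hd : ∀ y ∈ Icc (0:ℝ) (2 * L - 2),
        HasDerivAt (fun y => E y * Real.exp ((2/3) * m y)) _ y := fun y hy =>
      (hEd y hy).mul ((hmd y hy).const_mul (2/3)).exp
    apply antitoneOn_of_hasDerivWithinAt_nonpos (convex_Icc _ _)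
      (fun y hy => (hd y hy).continuousAt.continuousWithinAt)
      (fun y hy => (hd y (interior_subset hy)).hasDerivWithinAt)
    intro y hy
    have hy := interior_subset hy
    have h1 := hr1 y hy
    obtain ⟨h4, h5⟩ := hW y hy
    have hm' : (-(1 / (4 * L * r y ^ 3)) - 3 * y ^ 2 / (16 * L ^ 2 * r y ^ 5)) ≤ 0 := by
      have : 0 ≤ 1 / (4 * L * r y ^ 3) := by positivity
      have : 0 ≤ 3 * y ^ 2 / (16 * L ^ 2 * r y ^ 5) := by positivity
      linarith
    set m' := (-(1 / (4 * L * r y ^ 3)) - 3 * y ^ 2 / (16 * L ^ 2 * r y ^ 5))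
    have h6 := (abs_le.mp h4).1
    have : m' * (f y * g y) + m' * ((2/3) * E y) ≤ 0 := by nlinarith
    have h7 := Real.exp_pos ((2/3) * m y)
    nlinarith
  have hx : x ∈ Icc (0:ℝ) (2 * L - 2) := ⟨hx0, hx1⟩
  have h0m : (0:ℝ) ∈ Icc (0:ℝ) (2 * L - 2) := ⟨le_rfl, by linarith⟩
  have h1 := hanti h0m hx hx0
  have hE0 : E 0 ≤ 2 := by simpa [hE, hm, hr] using h0
  have hm0 : m 0 = 0 := by simp [hm]
  simp only [hm0, mul_zero, Real.exp_zero, mul_one] at h1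
  obtain ⟨h4, h5⟩ := hW x hx
  have hEx : 0 ≤ E x := by linarith [abs_nonneg (f x * g x)]
  have hexp : 2/3 ≤ Real.exp ((2/3) * m x) := by
    have := Real.add_one_le_exp ((2/3) * m x)
    linarith [(hmb x hx).1]
  have : E x * (2/3) ≤ 2 := by nlinarith
  change r x * f x ^ 2 + g x ^ 2 / r x ≤ 4
  linarith


/-- Increment comparison. -/
lemma incr_le {F F' B B' : ℝ → ℝ} {a b : ℝ} (hab : a ≤ b)
    (hF : ∀ x ∈ Icc a b, HasDerivAt F (F' x) x) (hB : ∀ x ∈ Icc a b, HasDerivAt B (B' x) x)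
    (h : ∀ x ∈ Icc a b, |F' x| ≤ B' x) : |F b - F a| ≤ B b - B a := by
  have h1 : MonotoneOn (fun x => B x - F x) (Icc a b) := by
    apply monotoneOn_of_hasDerivWithinAt_nonneg (convex_Icc _ _)
      (fun y hy => ((hB y hy).sub (hF y hy)).continuousAt.continuousWithinAt)
      (fun y hy => ((hB y (interior_subset hy)).sub (hF y (interior_subset hy))).hasDerivWithinAt)
    intro y hy
    linarith [(abs_le.mp (h y (interior_subset hy))).2]
  have h2 : MonotoneOn (fun x => B x + F x) (Icc a b) := by
    apply monotoneOn_of_hasDerivWithinAt_nonneg (convex_Icc _ _)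
      (fun y hy => ((hB y hy).add (hF y hy)).continuousAt.continuousWithinAt)
      (fun y hy => ((hB y (interior_subset hy)).add (hF y (interior_subset hy))).hasDerivWithinAt)
    intro y hy
    linarith [(abs_le.mp (h y (interior_subset hy))).1]
  have h3 := h1 (left_mem_Icc.mpr hab) (right_mem_Icc.mpr hab) hab
  have h4 := h2 (left_mem_Icc.mpr hab) (right_mem_Icc.mpr hab) hab
  simp only at h3 h4
  rw [abs_le]; constructor <;> linarith

lemma incr_le_const {F F' : ℝ → ℝ} {a b c : ℝ} (hab : a ≤ b)
    (hF : ∀ x ∈ Icc a b, HasDerivAt F (F' x) x)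
    (h : ∀ x ∈ Icc a b, |F' x| ≤ c) : |F b - F a| ≤ c * (b - a) := by
  have := incr_le (B := fun x => c * x) (B' := fun _ => c) hab hF
    (fun x _ => by simpa using (hasDerivAt_id x).const_mul c) h
  linarith

/-- Bulk primitive bound. -/
lemma bulk_prim {L : ℝ} (hL : 1 ≤ L) {F f g : ℝ → ℝ} (hF : ∀ x, HasDerivAt F (f x) x)
    (hf : ∀ x, HasDerivAt f (g x) x)
    (hg : ∀ x, HasDerivAt g ((x ^ 2 / (4 * L) - L) * f x) x)
    (hW : ∀ x, 0 ≤ x → x ≤ 2 * L - 2 →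
      √(L - x ^ 2 / (4 * L)) * f x ^ 2 + g x ^ 2 / √(L - x ^ 2 / (4 * L)) ≤ 4)
    {x : ℝ} (hx0 : 0 ≤ x) (hx1 : x ≤ 2 * L - 2) : |F x - F 0| ≤ 8 := by
  have hLp : 0 < L := by linarith
  set q : ℝ → ℝ := fun x => L - x ^ 2 / (4 * L) with hqdef
  have hq : ∀ y ∈ Icc (0:ℝ) x, 1 ≤ q y := by
    rintro y ⟨h1, h2⟩
    have : y ^ 2 / (4 * L) ≤ L - 1 := by
      rw [div_le_iff₀ (by positivity)]
      nlinarith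
    simp only [hqdef]; linarith
  have hqd : ∀ y, HasDerivAt q (-(y / (2 * L))) y := by
    intro y
    have := (((hasDerivAt_id y).pow 2).div_const (4 * L)).const_sub L
    refine HasDerivAt.congr_deriv this ?_
    simp
    field_simp
    ring
  have hfb : ∀ y ∈ Icc (0:ℝ) x, |f y| ≤ 2 ∧ |g y / q y| ≤ 2 := by
    intro y hy
    have h1 := hq y hy
    have h2 := hW y hy.1 (hy.2.trans hx1)
    have hr1 : 1 ≤ √(q y) := Real.one_le_sqrt.mpr h1
    have hrs : √(q y) ^ 2 = q y := Real.sq_sqrt (by linarith)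
    change √(q y) * f y ^ 2 + g y ^ 2 / √(q y) ≤ 4 at h2
    set r := √(q y)
    have h3 : 0 ≤ g y ^ 2 / r := by positivity
    have h4 : 0 ≤ r * f y ^ 2 := by positivity
    constructor
    · apply abs_le_of_sq_le_sq _ (by norm_num)
      nlinarith [sq_nonneg (f y)]
    · have h5 : g y ^ 2 ≤ 4 * r := by
        rw [← div_le_iff₀ (by positivity)]; linarith
      apply abs_le_of_sq_le_sq _ (by norm_num)
      rw [div_pow, div_le_iff₀ (by positivity), ← hrs]
      have : r ≤ (r ^ 2) ^ 2 := by
        rw [← pow_mul]; exact le_self_pow₀ hr1 (by norm_num)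
      linarith
  set p : ℝ → ℝ := fun y => (y / (2 * L)) / q y ^ 2 with hp
  have hpd : ∀ y ∈ Icc (0:ℝ) x, HasDerivAt p
      (1 / (2 * L * q y ^ 2) + y ^ 2 / (2 * L ^ 2 * q y ^ 3)) y := by
    intro y hy
    have h2 : q y ≠ 0 := by linarith [hq y hy]
    have := ((hasDerivAt_id y).div_const (2 * L)).div ((hqd y).pow 2) (pow_ne_zero 2 h2)
    refine HasDerivAt.congr_deriv this ?_
    simp
    field_simp
  have hHd : ∀ y ∈ Icc (0:ℝ) x, HasDerivAt (fun y => F y + g y / q y - f y * p y)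
      (-f y * (1 / (2 * L * q y ^ 2) + y ^ 2 / (2 * L ^ 2 * q y ^ 3))) y := by
    intro y hy
    have h2 : q y ≠ 0 := by linarith [hq y hy]
    have := ((hF y).add ((hg y).div (hqd y) h2)).sub ((hf y).mul (hpd y hy))
    refine HasDerivAt.congr_deriv this ?_
    have h3 : (y ^ 2 / (4 * L) - L) = - q y := by simp only [hqdef]; ring
    rw [h3]
    simp [hp]
    field_simp
    ring
  have key := incr_le (B := fun y => 2 * p y) (B' := fun y =>
      2 * (1 / (2 * L * q y ^ 2) + y ^ 2 / (2 * L ^ 2 * q y ^ 3))) hx0 hHd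
    (fun y hy => (hpd y hy).const_mul 2) (by
      intro y hy
      have h1 := hq y hy
      have : 0 ≤ 1 / (2 * L * q y ^ 2) + y ^ 2 / (2 * L ^ 2 * q y ^ 3) := by positivity
      rw [abs_mul, abs_neg, abs_of_nonneg this]
      exact mul_le_mul_of_nonneg_right (hfb y hy).1 this)
  have hp0 : p 0 = 0 := by simp [hp]
  have hx : x ∈ Icc 0 x := ⟨hx0, le_rfl⟩
  have hz : (0:ℝ) ∈ Icc 0 x := ⟨le_rfl, hx0⟩
  have hpx : 0 ≤ p x ∧ p x ≤ 1 := by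
    have h1 := hq x hx
    refine ⟨by positivity, ?_⟩
    simp only [hp]
    rw [div_le_one (by positivity)]
    have : x / (2 * L) ≤ 1 := by rw [div_le_one (by positivity)]; linarith
    nlinarith
  simp only [hp0] at key
  obtain ⟨a1, a2⟩ := hfb x hx
  obtain ⟨b1, b2⟩ := hfb 0 hz
  have c1 : |f x * p x| ≤ 2 := by
    rw [abs_mul, abs_of_nonneg hpx.1]; nlinarith [abs_nonneg (f x), hpx.1, hpx.2]
  rw [abs_le] at *
  constructor <;> linarith [hpx.2, key.1, key.2, a2.1, a2.2, b2.1, b2.2, c1.1, c1.2]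

/-- Edge and exterior. -/
lemma prim_bound {L : ℝ} (hL : 1 ≤ L) {F f g : ℝ → ℝ} (hF : ∀ x, HasDerivAt F (f x) x)
    (hf : ∀ x, HasDerivAt f (g x) x)
    (hg : ∀ x, HasDerivAt g ((x ^ 2 / (4 * L) - L) * f x) x)
    (hW : ∀ x, 0 ≤ x → x ≤ 2 * L - 2 →
      √(L - x ^ 2 / (4 * L)) * f x ^ 2 + g x ^ 2 / √(L - x ^ 2 / (4 * L)) ≤ 4)
    (hlim : Tendsto (fun x => f x * g x) atTop (nhds 0))
    {x : ℝ} (hx0 : 0 ≤ x) : |F x - F 0| ≤ 100 := by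
  have hLp : 0 < L := by linarith
  set q : ℝ → ℝ := fun x => L - x ^ 2 / (4 * L) with hqdef
  have hqd : ∀ y, HasDerivAt q (-(y / (2 * L))) y := by
    intro y
    have := (((hasDerivAt_id y).pow 2).div_const (4 * L)).const_sub L
    refine HasDerivAt.congr_deriv this ?_
    simp
    field_simp
    ring
  have hg' : ∀ x, HasDerivAt g (- q x * f x) x := by
    intro y; convert hg y using 1; simp only [hqdef]; ring
  have hbulk := fun {x : ℝ} => bulk_prim hL hF hf hg hW (x := x)
  rcases le_or_gt x (2 * L - 2) with h | hxa
  · linarith [hbulk hx0 h]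
  set x1 := 2 * L - 2 with hx1
  have hx1n : 0 ≤ x1 := by linarith
  have hq1 : q x1 = 2 - 1 / L := by simp only [hqdef, hx1]; field_simp; ring
  have hq1a : 1 ≤ q x1 := by
    rw [hq1]; have : 1 / L ≤ 1 := by rw [div_le_one hLp]; exact hL
    linarith
  have hq1b : q x1 ≤ 2 := by
    rw [hq1]; have : 0 ≤ 1 / L := by positivity
    linarith
  have hG1 : q x1 * f x1 ^ 2 + g x1 ^ 2 ≤ 9 := by
    have h2 := hW x1 hx1n le_rfl
    change √(q x1) * f x1 ^ 2 + g x1 ^ 2 / √(q x1) ≤ 4 at h2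
    have hr1 : 1 ≤ √(q x1) := Real.one_le_sqrt.mpr hq1a
    have hrs : √(q x1) ^ 2 = q x1 := Real.sq_sqrt (by linarith)
    set r := √(q x1)
    have : q x1 * f x1 ^ 2 + g x1 ^ 2 = r * (r * f x1 ^ 2 + g x1 ^ 2 / r) := by
      rw [← hrs]; field_simp
    rw [this]
    have : r ≤ 2 := by nlinarith
    nlinarith
  have hf1 : |f x1| ≤ 3 := by
    apply abs_le_of_sq_le_sq _ (by norm_num)
    nlinarith [sq_nonneg (f x1), sq_nonneg (g x1)]
  -- edge
  have hGanti : AntitoneOn (fun y => q y * f y ^ 2 + g y ^ 2) (Icc x1 (2 * L)) := by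
    have hd : ∀ y, HasDerivAt (fun y => q y * f y ^ 2 + g y ^ 2) (-(y / (2 * L)) * f y ^ 2) y := by
      intro y
      refine HasDerivAt.congr_deriv (((hqd y).mul ((hf y).pow 2)).add ((hg' y).pow 2)) ?_
      simp; ring
    apply antitoneOn_of_hasDerivWithinAt_nonpos (convex_Icc _ _)
      (fun y hy => (hd y).continuousAt.continuousWithinAt)
      (fun y hy => (hd y).hasDerivWithinAt)
    intro y hy
    have hy := interior_subset hy
    have : 0 ≤ y / (2 * L) := div_nonneg (by linarith [hy.1]) (by positivity)
    nlinarith [sq_nonneg (f y)]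
  have hge : ∀ y ∈ Icc x1 (2 * L), |g y| ≤ 3 := by
    intro y hy
    have h1 := hGanti (left_mem_Icc.mpr (by linarith)) hy hy.1
    simp only at h1
    have : 0 ≤ q y := by
      simp only [hqdef]
      rw [sub_nonneg, div_le_iff₀ (by positivity)]
      nlinarith [hy.1, hy.2]
    apply abs_le_of_sq_le_sq _ (by norm_num)
    nlinarith [sq_nonneg (f y), mul_nonneg this (sq_nonneg (f y))]
  have hfe : ∀ y ∈ Icc x1 (2 * L), |f y| ≤ 9 := by
    intro y hy
    have := incr_le_const (c := 3) hy.1 (fun z _ => hf z)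
      (fun z hz => hge z ⟨hz.1, hz.2.trans hy.2⟩)
    have h2 := hy.2
    rw [abs_le] at *
    constructor <;> linarith [this.1, this.2, hf1.1, hf1.2]
  have hFe : ∀ y ∈ Icc x1 (2 * L), |F y - F x1| ≤ 18 := by
    intro y hy
    have := incr_le_const (c := 9) hy.1 (fun z _ => hF z)
      (fun z hz => hfe z ⟨hz.1, hz.2.trans hy.2⟩)
    linarith [hy.2]
  have hF1 := hbulk hx1n le_rfl
  rcases le_or_gt x (2 * L) with h | hxb
  · have := hFe x ⟨hxa.le, h⟩
    rw [abs_le] at *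
    constructor <;> linarith [this.1, this.2, hF1.1, hF1.2]
  have hFt := hFe (2 * L) ⟨by linarith, le_rfl⟩
  have hft := hfe (2 * L) ⟨by linarith, le_rfl⟩
  have hgt := hge (2 * L) ⟨by linarith, le_rfl⟩
  -- exterior
  have hqneg : ∀ y ∈ Ici (2 * L), q y ≤ 0 := by
    intro y hy
    have hy : 2 * L ≤ y := hy
    simp only [hqdef]
    rw [sub_nonpos, le_div_iff₀ (by positivity)]
    nlinarith
  have hfg : MonotoneOn (fun y => f y * g y) (Ici (2 * L)) := by
    have hd : ∀ y, HasDerivAt (fun y => f y * g y) (g y ^ 2 + - q y * f y ^ 2) y := by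
      intro y
      refine HasDerivAt.congr_deriv ((hf y).mul (hg' y)) ?_
      ring
    apply monotoneOn_of_hasDerivWithinAt_nonneg (convex_Ici _)
      (fun y hy => (hd y).continuousAt.continuousWithinAt)
      (fun y hy => (hd y).hasDerivWithinAt)
    intro y hy
    have := hqneg y (interior_subset hy)
    nlinarith [sq_nonneg (f y), sq_nonneg (g y)]
  have hfgneg : ∀ y ∈ Ici (2 * L), f y * g y ≤ 0 := by
    intro y hy
    refine ge_of_tendsto hlim ?_
    filter_upwards [eventually_ge_atTop y] with z hz
    exact hfg hy (le_trans (mem_Ici.mp hy) hz : 2 * L ≤ z) hz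
  have hf2 : AntitoneOn (fun y => f y ^ 2) (Ici (2 * L)) := by
    have hd : ∀ y, HasDerivAt (fun y => f y ^ 2) (2 * (f y * g y)) y := by
      intro y
      refine HasDerivAt.congr_deriv ((hf y).pow 2) ?_
      simp; ring
    apply antitoneOn_of_hasDerivWithinAt_nonpos (convex_Ici _)
      (fun y hy => (hd y).continuousAt.continuousWithinAt)
      (fun y hy => (hd y).hasDerivWithinAt)
    intro y hy
    linarith [hfgneg y (interior_subset hy)]
  have hg2 : AntitoneOn (fun y => g y ^ 2) (Ici (2 * L)) := by
    have hd : ∀ y, HasDerivAt (fun y => g y ^ 2) (2 * (-q y * (f y * g y))) y := by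
      intro y
      refine HasDerivAt.congr_deriv ((hg' y).pow 2) ?_
      simp; ring
    apply antitoneOn_of_hasDerivWithinAt_nonpos (convex_Ici _)
      (fun y hy => (hd y).continuousAt.continuousWithinAt)
      (fun y hy => (hd y).hasDerivWithinAt)
    intro y hy
    have := hfgneg y (interior_subset hy)
    have := hqneg y (interior_subset hy)
    nlinarith
  have hfx : ∀ y ∈ Ici (2 * L), |f y| ≤ 9 := fun y hy =>
    (sq_le_sq.mp (hf2 self_mem_Ici hy hy)).trans hft
  have hgx : ∀ y ∈ Ici (2 * L), |g y| ≤ 3 := fun y hy =>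
    (sq_le_sq.mp (hg2 self_mem_Ici hy hy)).trans hgt
  have hFn : ∀ y ∈ Icc (2 * L) (2 * L + 1), |F y - F (2 * L)| ≤ 9 := by
    intro y hy
    have := incr_le_const (c := 9) hy.1 (fun z _ => hF z)
      (fun z hz => hfx z hz.1)
    linarith [hy.2]
  rcases le_or_gt x (2 * L + 1) with h | hxc
  · have := hFn x ⟨hxb.le, h⟩
    rw [abs_le] at *
    constructor <;> linarith [this.1, this.2, hF1.1, hF1.2, hFt.1, hFt.2]
  have hF2 := hFn (2 * L + 1) ⟨by linarith, le_rfl⟩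
  have hqm : ∀ y, 2 * L + 1 ≤ y → q y ≤ -1 := by
    intro y hy
    have : L + 1 ≤ y ^ 2 / (4 * L) := by
      rw [le_div_iff₀ (by positivity)]
      nlinarith
    simp only [hqdef]; linarith
  have key := incr_le (F := fun y => F y + g y / q y) (F' := fun y => g y * ((y / (2 * L)) / q y ^ 2))
      (B := fun y => 3 * (q y)⁻¹) (B' := fun y => 3 * ((y / (2 * L)) / q y ^ 2)) hxc.le
    (by
      intro y hy
      have h2 : q y ≠ 0 := by linarith [hqm y hy.1]
      refine HasDerivAt.congr_deriv ((hF y).add ((hg' y).div (hqd y) h2)) ?_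
      field_simp
      ring)
    (by
      intro y hy
      have h2 : q y ≠ 0 := by linarith [hqm y hy.1]
      refine HasDerivAt.congr_deriv (((hqd y).inv h2).const_mul 3) ?_
      ring)
    (by
      intro y hy
      have hy0 : 0 ≤ y := by linarith [hy.1]
      have : 0 ≤ (y / (2 * L)) / q y ^ 2 := by positivity
      rw [abs_mul, abs_of_nonneg this]
      exact mul_le_mul_of_nonneg_right (hgx y (by have := hy.1; rw [mem_Ici]; linarith)) this)
  have hinv : ∀ y, 2 * L + 1 ≤ y → (q y)⁻¹ ≤ 0 ∧ -1 ≤ (q y)⁻¹ ∧ |g y / q y| ≤ 3 := by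
    intro y hy
    have h1 := hqm y hy
    have h2 : |q y| = - q y := abs_of_neg (by linarith)
    refine ⟨inv_nonpos.mpr (by linarith), ?_, ?_⟩
    · rw [← neg_le_neg_iff, neg_neg, ← inv_neg]
      exact inv_le_one_of_one_le₀ (by linarith)
    · rw [abs_div, div_le_iff₀ (by linarith)]
      have := hgx y (by rw [mem_Ici]; linarith)
      linarith
  obtain ⟨a1, a2, a3⟩ := hinv x hxc.le
  obtain ⟨b1, b2, b3⟩ := hinv (2 * L + 1) le_rfl
  rw [abs_le] at *
  constructor <;> linarith [key.1, key.2, hF1.1, hF1.2, hFt.1, hFt.2, hF2.1, hF2.2, a3.1, a3.2, b3.1, b3.2]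



open Polynomial in
lemma deriv_hermite (n : ℕ) :
    derivative (hermite (n + 1)) = ((n : ℤ[X]) + 1) * hermite n := by
  induction n with
  | zero => simp
  | succ k ih =>
    rw [hermite_succ (k + 1), derivative_sub, derivative_mul, ih, hermite_succ k]
    simp only [derivative_X, derivative_mul, derivative_add, derivative_natCast, derivative_one]
    push_cast
    ring

open Polynomial in
/-- The real Hermite polynomial. -/
noncomputable def herR (n : ℕ) : ℝ[X] := (hermite n).map (Int.castRingHom ℝ)

open Polynomial in
lemma herR_succ (n : ℕ) : herR (n + 1) = X * herR n - derivative (herR n) := by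
  simp [herR, hermite_succ, derivative_map]

open Polynomial in
lemma herR_deriv (n : ℕ) : derivative (herR (n + 1)) = ((n : ℝ[X]) + 1) * herR n := by
  rw [herR, herR, derivative_map, deriv_hermite]; simp

open Polynomial in
lemma herR_ode (n : ℕ) : derivative (derivative (herR n)) =
    X * derivative (herR n) - (n : ℝ[X]) * herR n := by
  have h := herR_deriv n
  rw [herR_succ, derivative_sub, derivative_mul] at h
  simp only [derivative_X] at h
  linear_combination -h

lemma hermiteP_eq (n : ℕ) (x : ℝ) : hermiteP n x = (herR n).eval x := by
  have h := Polynomial.hermite_eq_deriv_gaussian' n x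
  rw [herR, Polynomial.eval_map, ← algebraMap_int_eq, ← Polynomial.aeval_def, h, hermiteP,
    iteratedDeriv_eq_iterate]
  simp only [neg_div]
  ring

/-- normalising constant -/
noncomputable def oscC (n : ℕ) : ℝ := (2 * Real.pi) ^ (-(1:ℝ)/4) * ((n.factorial : ℝ)) ^ (-(1:ℝ)/2)

noncomputable def oscD (n : ℕ) (x : ℝ) : ℝ :=
  oscC n * Real.exp (-x ^ 2 / 4) * ((herR n).derivative.eval x - x / 2 * (herR n).eval x)

lemma osc_eq (n : ℕ) (x : ℝ) : osc n x = oscC n * Real.exp (-x ^ 2 / 4) * (herR n).eval x := by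
  rw [osc, hermiteP_eq, oscC]

lemma gauss4 (x : ℝ) : HasDerivAt (fun x : ℝ => Real.exp (-x ^ 2 / 4))
    (-(x / 2) * Real.exp (-x ^ 2 / 4)) x := by
  refine HasDerivAt.congr_deriv ((((hasDerivAt_id x).pow 2).neg.div_const 4).exp) ?_
  simp; ring

lemma osc_hasDeriv (n : ℕ) (x : ℝ) : HasDerivAt (osc n) (oscD n x) x := by
  have : osc n = fun x => oscC n * Real.exp (-x ^ 2 / 4) * (herR n).eval x := funext (osc_eq n)
  rw [this]
  refine HasDerivAt.congr_deriv (((gauss4 x).const_mul (oscC n)).mul ((herR n).hasDerivAt x)) ?_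
  simp only [oscD]; ring

lemma oscD_hasDeriv (n : ℕ) (x : ℝ) :
    HasDerivAt (oscD n) ((x ^ 2 / 4 - (n + 1/2)) * osc n x) x := by
  have h := ((gauss4 x).const_mul (oscC n)).mul (((herR n).derivative.hasDerivAt x).sub
    (((hasDerivAt_id x).div_const 2).mul ((herR n).hasDerivAt x)))
  refine HasDerivAt.congr_deriv h ?_
  rw [osc_eq, herR_ode]
  simp
  ring

lemma oscC_sq (n : ℕ) : oscC n ^ 2 ≤ 1 / (n.factorial : ℝ) := by
  have hf : (0:ℝ) < n.factorial := by exact_mod_cast n.factorial_pos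
  have h1 : ((n.factorial : ℝ) ^ (-(1:ℝ)/2)) ^ 2 = 1 / (n.factorial : ℝ) := by
    rw [← Real.rpow_natCast, ← Real.rpow_mul hf.le]
    norm_num [Real.rpow_neg_one]
  have h2 : (2 * Real.pi) ^ (-(1:ℝ)/4) ≤ 1 := 
    Real.rpow_le_one_of_one_le_of_nonpos (by linarith [Real.pi_gt_three]) (by norm_num)
  have h3 : 0 ≤ (2 * Real.pi) ^ (-(1:ℝ)/4) := by positivity
  rw [oscC, mul_pow, h1]
  have : ((2 * Real.pi) ^ (-(1:ℝ)/4)) ^ 2 ≤ 1 := pow_le_one₀ h3 h2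
  have h4 : 0 ≤ 1 / (n.factorial : ℝ) := by positivity
  nlinarith

lemma herR_zero_rec (n : ℕ) : (herR (n + 2)).eval 0 = -(n + 1) * (herR n).eval 0 := by
  rw [herR_succ, herR_deriv]; simp; ring

/-- `(n+1)·(Hₙ(0)²/n!)² ≤ 1`. -/
lemma herR_zero_bound (n : ℕ) : (n + 1) * ((herR n).eval 0 ^ 2 / n.factorial) ^ 2 ≤ 1 := by
  induction n using Nat.twoStepInduction with
  | zero => simp [herR]
  | one => simp [herR]
  | more n ih _ =>
    rw [herR_zero_rec]
    have hf : (0:ℝ) < n.factorial := by exact_mod_cast n.factorial_pos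
    have e : (-((n:ℝ) + 1) * (herR n).eval 0) ^ 2 / ((n + 2).factorial : ℝ) =
        ((n + 1) / (n + 2)) * ((herR n).eval 0 ^ 2 / n.factorial) := by
      rw [Nat.factorial_succ, Nat.factorial_succ]
      push_cast
      field_simp
      ring
    rw [e]
    set a := (herR n).eval 0 ^ 2 / (n.factorial : ℝ)
    push_cast
    have : ((n:ℝ) + 2 + 1) * ((n + 1) / (n + 2) * a) ^ 2 =
      (((n:ℝ) + 1) * (n + 3) / (n + 2) ^ 2) * ((n + 1) * a ^ 2) := by
      field_simp; ring
    rw [this]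
    have h1 : (((n:ℝ) + 1) * (n + 3) / (n + 2) ^ 2) ≤ 1 := by
      rw [div_le_one (by positivity)]; nlinarith
    exact mul_le_one₀ h1 (by positivity) ih

lemma osc_zero_sq (n : ℕ) : √(n + 1/2) * osc n 0 ^ 2 ≤ 1 := by
  have hf : (0:ℝ) < n.factorial := by exact_mod_cast n.factorial_pos
  have h1 := herR_zero_bound n
  have h2 : osc n 0 ^ 2 ≤ (herR n).eval 0 ^ 2 / n.factorial := by
    rw [osc_eq]
    simp only [mul_pow]
    simp
    have := mul_le_mul_of_nonneg_right (oscC_sq n) (sq_nonneg ((herR n).eval 0))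
    refine this.trans (le_of_eq (by ring))
  set a := (herR n).eval 0 ^ 2 / (n.factorial : ℝ)
  have ha : 0 ≤ a := by positivity
  calc √(n + 1/2) * osc n 0 ^ 2 ≤ √(n + 1) * a := by
        gcongr; norm_num
    _ ≤ 1 := by
        refine (abs_le_of_sq_le_sq' ?_ zero_le_one).2
        rw [mul_pow, Real.sq_sqrt (by positivity)]; linarith

lemma oscD_zero_sq (n : ℕ) (hn : 1 ≤ n) : oscD n 0 ^ 2 / √(n + 1/2) ≤ 1 := by
  obtain ⟨k, rfl⟩ : ∃ k, n = k + 1 := ⟨n - 1, by omega⟩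
  have hf : (0:ℝ) < k.factorial := by exact_mod_cast k.factorial_pos
  have h1 := herR_zero_bound k
  have h2 : oscD (k + 1) 0 ^ 2 ≤ (k + 1) * ((herR k).eval 0 ^ 2 / k.factorial) := by
    rw [oscD, herR_deriv]
    simp only [mul_pow]
    simp
    have := mul_le_mul_of_nonneg_right (oscC_sq (k + 1)) (sq_nonneg ((k + 1) * (herR k).eval 0))
    refine this.trans (le_of_eq ?_)
    rw [Nat.factorial_succ]
    push_cast
    field_simp
  set a := (herR k).eval 0 ^ 2 / (k.factorial : ℝ)
  have ha : 0 ≤ a := by positivity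
  rw [div_le_one (by positivity)]
  refine h2.trans ?_
  apply Real.le_sqrt_of_sq_le
  push_cast
  nlinarith

lemma poly_gauss (p : Polynomial ℝ) :
    Tendsto (fun x => p.eval x * Real.exp (-x ^ 2 / 2)) atTop (nhds 0) := by
  have h := (p.tendsto_div_exp_atTop).norm
  rw [norm_zero] at h
  refine squeeze_zero_norm' ?_ h
  filter_upwards [eventually_ge_atTop 2] with x hx
  rw [norm_mul, norm_div, div_eq_mul_inv ‖_‖ ‖_‖, Real.norm_eq_abs (Real.exp _), Real.norm_eq_abs (Real.exp _),
    Real.abs_exp, Real.abs_exp, ← Real.exp_neg]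
  gcongr
  nlinarith

open Polynomial in
lemma osc_lim (n : ℕ) : Tendsto (fun x => osc n x * oscD n x) atTop (nhds 0) := by
  refine (poly_gauss (C (oscC n ^ 2) * herR n *
    (derivative (herR n) - C (1/2) * X * herR n))).congr ?_
  intro x
  have : Real.exp (-x ^ 2 / 2) = Real.exp (-x ^ 2 / 4) * Real.exp (-x ^ 2 / 4) := by
    rw [← Real.exp_add]; ring_nf
  rw [osc_eq, oscD, this]
  simp
  ring

open Polynomial in
lemma osc_lim' (n : ℕ) : Tendsto (fun x => osc n (-x) * -oscD n (-x)) atTop (nhds 0) := by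
  refine (poly_gauss (-(C (oscC n ^ 2) * herR n *
    (derivative (herR n) - C (1/2) * X * herR n)).comp (-X))).congr ?_
  intro x
  have : Real.exp (-x ^ 2 / 2) = Real.exp (-x ^ 2 / 4) * Real.exp (-x ^ 2 / 4) := by
    rw [← Real.exp_add]; ring_nf
  rw [osc_eq, oscD, this]
  simp
  ring

lemma core {s σ : ℝ} (hs : 1 ≤ s) (hσ : 0 < σ) (hσs : σ ^ 2 = s) {U u v : ℝ → ℝ}
    (hU : ∀ z, HasDerivAt U (u z) z) (hu : ∀ z, HasDerivAt u (v z) z)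
    (hv : ∀ z, HasDerivAt v ((z ^ 2 / 4 - s ^ 6) * u z) z)
    (h0 : s ^ 3 * u 0 ^ 2 + v 0 ^ 2 / s ^ 3 ≤ 2)
    (hlim : Tendsto (fun x => u x * v x) atTop (nhds 0)) {z : ℝ} (hz : 0 ≤ z) :
    σ ^ 3 * |U z - U 0| ≤ 100 := by
  have hs0 : 0 < s := by linarith
  have hsc : ∀ x : ℝ, HasDerivAt (fun x => x / s) (1 / s) x := fun x =>
    (hasDerivAt_id x).div_const s
  have hL : 1 ≤ s ^ 4 := one_le_pow₀ hs
  have hF : ∀ x, HasDerivAt (fun x => σ ^ 3 * U (x / s)) (σ * u (x / s)) x := by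
    intro x
    refine HasDerivAt.congr_deriv (((hU (x / s)).comp x (hsc x)).const_mul (σ ^ 3)) ?_
    rw [← hσs]; field_simp
  have hf : ∀ x, HasDerivAt (fun x => σ * u (x / s)) (σ / s * v (x / s)) x := by
    intro x
    refine HasDerivAt.congr_deriv (((hu (x / s)).comp x (hsc x)).const_mul σ) ?_
    field_simp
  have hg : ∀ x, HasDerivAt (fun x => σ / s * v (x / s))
      ((x ^ 2 / (4 * s ^ 4) - s ^ 4) * (σ * u (x / s))) x := by
    intro x
    refine HasDerivAt.congr_deriv (((hv (x / s)).comp x (hsc x)).const_mul (σ / s)) ?_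
    field_simp
  have hsq : √(s ^ 4) = s ^ 2 := by
    rw [show s ^ 4 = (s ^ 2) ^ 2 by ring, Real.sqrt_sq (by positivity)]
  have hE : √(s ^ 4) * (σ * u (0 / s)) ^ 2 + (σ / s * v (0 / s)) ^ 2 / √(s ^ 4) ≤ 2 := by
    rw [hsq, zero_div]
    refine le_trans (le_of_eq ?_) h0
    rw [mul_pow, mul_pow, div_pow, hσs]
    field_simp
  have hl : Tendsto (fun x => σ * u (x / s) * (σ / s * v (x / s))) atTop (nhds 0) := by
    have h1 := (hlim.comp (tendsto_id.atTop_div_const hs0)).const_mul (σ * (σ / s))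
    rw [mul_zero] at h1
    refine h1.congr ?_
    intro x
    simp only [Function.comp, id]; ring
  have key := prim_bound hL hF hf hg (fun x h1 h2 => bulk_energy hL hf hg hE h1 h2) hl
    (x := s * z) (by positivity)
  rw [mul_div_cancel_left₀ _ hs0.ne', zero_div, ← mul_sub, abs_mul, abs_of_pos (by positivity)] at key
  exact key

lemma osc_cont (n : ℕ) : Continuous (osc n) :=
  continuous_iff_continuousAt.mpr fun x => (osc_hasDeriv n x).continuousAt

lemma osc_int0 (n : ℕ) (hn : 1 ≤ n) (z : ℝ) :
    (n : ℝ) ^ ((1:ℝ)/4) * |∫ y in (0:ℝ)..z, osc n y| ≤ 100 := by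
  set ν : ℝ := n + 1/2 with hν
  have hn1 : (1:ℝ) ≤ n := by exact_mod_cast hn
  have hν0 : 0 < ν := by linarith
  set σ := ν ^ ((1:ℝ)/12) with hσdef
  have hσ : 0 < σ := by positivity
  have hs : 1 ≤ σ ^ 2 := one_le_pow₀ (Real.one_le_rpow (by linarith) (by norm_num))
  have h12 : (σ ^ 2) ^ 6 = ν := by
    rw [← pow_mul, hσdef, ← Real.rpow_natCast, ← Real.rpow_mul hν0.le]
    norm_num
  have h3 : (σ ^ 2) ^ 3 = √ν := by
    rw [← h12, show ((σ ^ 2) ^ 6) = ((σ ^ 2) ^ 3) ^ 2 by ring, Real.sqrt_sq (by positivity)]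
  have h4 : (n : ℝ) ^ ((1:ℝ)/4) ≤ σ ^ 3 := by
    have : σ ^ 3 = ν ^ ((1:ℝ)/4) := by
      rw [hσdef, ← Real.rpow_natCast, ← Real.rpow_mul hν0.le]
      norm_num
    rw [this]
    exact Real.rpow_le_rpow (by positivity) (by linarith) (by norm_num)
  set U : ℝ → ℝ := fun z => ∫ y in (0:ℝ)..z, osc n y with hUdef
  have hU : ∀ z, HasDerivAt U (osc n z) z := fun z =>
    ((osc_cont n).integral_hasStrictDerivAt 0 z).hasDerivAt
  have hU0 : U 0 = 0 := by simp [hUdef]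
  have e1 := osc_zero_sq n
  have e2 := oscD_zero_sq n hn
  suffices h : σ ^ 3 * |U z| ≤ 100 from
    (mul_le_mul_of_nonneg_right h4 (abs_nonneg _)).trans h
  rcases le_total 0 z with hz | hz
  · have := core hs hσ rfl hU (osc_hasDeriv n) (by rw [h12]; exact oscD_hasDeriv n)
      (by rw [h3]; linarith) (osc_lim n) hz
    simpa [hU0] using this
  · have hneg : ∀ x : ℝ, HasDerivAt (fun x : ℝ => -x) (-1) x := hasDerivAt_neg
    have := core (z := -z) (U := fun x => -U (-x)) (u := fun x => osc n (-x))
      (v := fun x => -oscD n (-x)) hs hσ rfl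
      (fun x => by
        refine HasDerivAt.congr_deriv ((hU (-x)).comp x (hneg x)).neg ?_
        ring)
      (fun x => by
        refine HasDerivAt.congr_deriv ((osc_hasDeriv n (-x)).comp x (hneg x)) ?_
        ring)
      (fun x => by
        refine HasDerivAt.congr_deriv ((oscD_hasDeriv n (-x)).comp x (hneg x)).neg ?_
        rw [h12]
        ring)
      (by rw [h3]; simp only [neg_zero, neg_sq]; linarith) (osc_lim' n) (by linarith)
    simpa [hU0] using this

lemma osc_int (n : ℕ) (hn : 1 ≤ n) (a b : ℝ) :
    (n : ℝ) ^ ((1:ℝ)/4) * |∫ y in a..b, osc n y| ≤ 200 := by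
  have h1 := osc_int0 n hn a
  have h2 := osc_int0 n hn b
  have hi : ∀ x y : ℝ, IntervalIntegrable (osc n) volume x y := fun x y =>
    (osc_cont n).intervalIntegrable x y
  rw [← intervalIntegral.integral_interval_sub_left (hi 0 b) (hi 0 a)]
  have h3 : 0 ≤ (n : ℝ) ^ ((1:ℝ)/4) := by positivity
  have := abs_sub (∫ y in (0:ℝ)..b, osc n y) (∫ y in (0:ℝ)..a, osc n y)
  nlinarith

lemma psi_int (n : ℕ) (hn : 1 ≤ n) (a b : ℝ) : |∫ y in a..b, psiN n y| ≤ 200 := by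
  have hn1 : (1:ℝ) ≤ n := by exact_mod_cast hn
  have hn0 : (0:ℝ) < n := by linarith
  have hc : (n : ℝ) ^ (-(1:ℝ)/6) ≠ 0 := by positivity
  simp only [psiN, psiUp]
  rw [intervalIntegral.integral_const_mul, intervalIntegral.integral_comp_add_mul _ hc, smul_eq_mul,
    ← mul_assoc, abs_mul]
  have : |(n : ℝ) ^ ((1:ℝ)/12) * ((n : ℝ) ^ (-(1:ℝ)/6))⁻¹| = (n : ℝ) ^ ((1:ℝ)/4) := by
    rw [abs_of_pos (by positivity), ← Real.rpow_neg hn0.le, ← Real.rpow_add hn0]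
    norm_num
  rw [this]
  exact osc_int n hn _ _

lemma psi_cont (n : ℕ) : Continuous (psiN n) := by
  have := osc_cont n
  unfold psiN psiUp
  fun_prop

lemma epsPsi_le (n : ℕ) (hn : 1 ≤ n) (x : ℝ) : |epsPsi n x| ≤ 200 := by
  have hi : ∀ x y : ℝ, IntervalIntegrable (psiN n) volume x y := fun x y =>
    (psi_cont n).intervalIntegrable x y
  rw [epsPsi, epsF]
  suffices h : |∫ y : ℝ, Real.sign (x - y) * psiN n y| ≤ 400 by
    rw [abs_mul, abs_of_pos (by norm_num : (0:ℝ) < 1/2)]; linarith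
  by_cases hint : Integrable (fun y : ℝ => Real.sign (x - y) * psiN n y)
  swap
  · rw [integral_undef hint]; norm_num
  have hl := intervalIntegral_tendsto_integral hint tendsto_neg_atTop_atBot tendsto_id
  refine le_of_tendsto hl.abs ?_
  filter_upwards [eventually_ge_atTop |x|] with R hR
  have hR' := abs_le.mp hR
  simp only [id]
  rw [← intervalIntegral.integral_add_adjacent_intervals (b := x)
    hint.intervalIntegrable hint.intervalIntegrable]
  have h1 : ∫ y in (-R)..x, Real.sign (x - y) * psiN n y = ∫ y in (-R)..x, psiN n y := by
    rw [intervalIntegral.integral_of_le hR'.1, intervalIntegral.integral_of_le hR'.1,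
      integral_Ioc_eq_integral_Ioo, integral_Ioc_eq_integral_Ioo]
    refine setIntegral_congr_fun measurableSet_Ioo fun y hy => ?_
    rw [Real.sign_of_pos (by linarith [hy.2]), one_mul]
  have h2 : ∫ y in x..R, Real.sign (x - y) * psiN n y = -∫ y in x..R, psiN n y := by
    rw [← intervalIntegral.integral_neg, intervalIntegral.integral_of_le hR'.2,
      intervalIntegral.integral_of_le hR'.2]
    refine setIntegral_congr_fun measurableSet_Ioc fun y hy => ?_
    rw [Real.sign_of_neg (by linarith [hy.1])]; ring
  rw [h1, h2]
  have a1 := abs_le.mp (psi_int n hn (-R) x)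
  have a2 := abs_le.mp (psi_int n hn x R)
  rw [abs_le]; constructor <;> linarith [a1.1, a1.2, a2.1, a2.2]

/-- uniform bounds on `εψ_n` and on primitives of `ψ_n`. -/
theorem epsPsi_bounds :
    (∃ C : ℝ, 0 < C ∧ ∀ n : ℕ, 1 ≤ n → ∀ x : ℝ, |epsPsi n x| ≤ C) ∧
    (∀ a : ℝ, ∃ C : ℝ, 0 < C ∧ ∀ n : ℕ, 1 ≤ n → ∀ x : ℝ,
      |∫ y in a..x, psiN n y| ≤ C) := by
  exact ⟨⟨200, by norm_num, fun n hn x => epsPsi_le n hn x⟩,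
    fun a => ⟨200, by norm_num, fun n hn x => psi_int n hn a x⟩⟩
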